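/- Suppose g and h are orientation-preserving C² diffeomorphisms of I = [0,1] satisfying g ∘ hᵐ ∘ g⁻¹ = hⁿ for some positive integers m and n. Then h and g ∘ h ∘ g⁻¹ commute. -/

import Mathlib

/-- A permutation of `ℝ` representing an orientation-preserving C² diffeomorphism of
`I = [0,1]`: it is the identity off `[0,1]`, is C² on `[0,1]`, and has positive
(one-sided, at the endpoints) derivative on `[0,1]`. -/
def IsDiffI (f : Equiv.Perm ℝ) : Prop :=
  (∀ x, x ∉ Set.Icc (0 : ℝ) 1 → f x = x) ∧
  ContDiffOn ℝ 2 f (Set.Icc 0 1) ∧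
  ∀ x ∈ Set.Icc (0 : ℝ) 1, 0 < derivWithin f (Set.Icc 0 1) x

/-!
Put `k = g h g⁻¹`, so that `k ^ m = h ^ n =: f`, a diffeomorphism commuting with both `h` and `k`.
Let `f` push `y` down to a fixed point `a`. If `h k` and `k h` had no coincidence point in
`(a, y]`, one of them would dominate the other along the whole `k`-orbit of `y`, and by monotonicity
`k ^ m` would not commute with `h`. So the commutator of `h` and `k` fixes a point of `(a, y]`;
as it commutes with the contraction `f`, Kopell's lemma forces it to fix `y`.

Kopell's lemma rests on control of distortion. Let `c` commute with `f`, fix `p` and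
satisfy `c ^ l y → p` as `l → ∞`, where `f y ≤ p < y`. The chord of `c ^ l` over `[p, y]` is
conjugate by `f ^ j` to the chord over `[f ^ j p, f ^ j y]`, whose slope tends to `1` as `j → ∞`
because the fixed points `f ^ j p` of `c ^ l` accumulate at `a`. The distortion of `f ^ j` on
`[p, y]` is bounded independently of `j`, the intervals `f ^ j [p, y]` being disjoint. Hence the
slopes of `c ^ l` over `[p, y]` are bounded below independently of `l`, which contradicts
`c ^ l y → p`.
-/

open Set Filter Topology Function

section MonotoneDynamics

theorem isFixedPt_iterate_iff {α : Type*} [LinearOrder α] {f : α → α} (hf : Monotone f) {n : ℕ}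
    (hn : 0 < n) {x : α} : IsFixedPt f^[n] x ↔ IsFixedPt f x := by
  simpa [IsFixedPt] using
    Function.Commute.id_right.iterate_pos_eq_iff_map_eq hf strictMono_id hn (x := x)

theorem iterate_mem_Ioc {α : Type*} [PartialOrder α] {f : α → α} (hf : StrictMono f) {a y : α}
    (ha : IsFixedPt f a) (hay : a < y) (hy : f y ≤ y) (n : ℕ) : f^[n] y ∈ Ioc a y := by
  refine ⟨?_, hf.monotone.antitone_iterate_of_map_le hy n.zero_le⟩
  simpa only [(ha.iterate n).eq] using hf.iterate n hay

theorem exists_isFixedPt_tendsto_iterate {α : Type*} [ConditionallyCompleteLinearOrder α]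
    [TopologicalSpace α] [OrderTopology α] {f : α → α} (hf : Monotone f) (hfc : Continuous f)
    {y : α} (hy : f y < y) (hb : BddBelow (range fun n ↦ f^[n] y)) :
    ∃ a, IsFixedPt f a ∧ a < y ∧ Tendsto (fun n ↦ f^[n] y) atTop (𝓝 a) := by
  have ht := tendsto_atTop_ciInf (hf.antitone_iterate_of_map_le hy.le) hb
  exact ⟨_, isFixedPt_of_tendsto_iterate ht hfc.continuousAt, (ciInf_le hb 1).trans_lt hy, ht⟩

theorem tendsto_iterate_of_mem_Icc {α : Type*} [Preorder α] [TopologicalSpace α]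
    [OrderTopology α] {f : α → α} (hf : Monotone f) {a x y : α} (ha : IsFixedPt f a)
    (hx : x ∈ Icc a y) (ht : Tendsto (fun n ↦ f^[n] y) atTop (𝓝 a)) :
    Tendsto (fun n ↦ f^[n] x) atTop (𝓝 a) := by
  refine tendsto_of_tendsto_of_tendsto_of_le_of_le tendsto_const_nhds ht
    (fun n ↦ ?_) fun n ↦ hf.iterate n hx.2
  simpa only [(ha.iterate n).eq] using hf.iterate n hx.1

theorem isFixedPt_of_tendsto_iterate_of_commute {α : Type*} [TopologicalSpace α] [T2Space α]
    {f c : α → α} (hc : Continuous c) (hfc : Function.Commute f c) {a x : α} (hx : IsFixedPt c x)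
    (ht : Tendsto (fun n ↦ f^[n] x) atTop (𝓝 a)) : IsFixedPt c a :=
  (isClosed_fixedPoints hc).mem_of_tendsto ht <| .of_forall fun n ↦
    hx.map (hfc.iterate_left n)

theorem exists_map_map_eq_of_commute_iterate {α : Type*} [LinearOrder α] [TopologicalSpace α]
    [OrderClosedTopology α] {h k : α → α} (hh : Continuous h) (hk : Continuous k)
    (hkm : Monotone k) {m : ℕ} (hm : 0 < m) (hcomm : Function.Commute h k^[m]) {J : Set α}
    (hJ : IsPreconnected J) {y : α} (hy : ∀ i < m, k^[i] y ∈ J) :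
    ∃ x ∈ J, h (k x) = k (h x) := by
  obtain ⟨i, hi, hle⟩ : ∃ i < m, h (k (k^[i] y)) ≤ k (h (k^[i] y)) := by
    by_contra! hlt
    refine (hkm.seq_pos_lt_seq_of_le_of_lt hm (x := fun i ↦ k^[i] (h y))
      (y := fun i ↦ h (k^[i] y)) le_rfl (fun i _ ↦ ?_) fun i hi ↦ ?_).ne (hcomm y).symm
    · exact (iterate_succ_apply' ..).le
    · simpa only [iterate_succ_apply'] using hlt i hi
  obtain ⟨j, hj, hge⟩ : ∃ j < m, k (h (k^[j] y)) ≤ h (k (k^[j] y)) := by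
    by_contra! hlt
    refine (hkm.seq_pos_lt_seq_of_lt_of_le hm (x := fun i ↦ h (k^[i] y))
      (y := fun i ↦ k^[i] (h y)) le_rfl (fun i hi ↦ ?_) fun i _ ↦ ?_).ne (hcomm y)
    · simpa only [iterate_succ_apply'] using hlt i hi
    · exact (iterate_succ_apply' ..).ge
  exact hJ.intermediate_value₂ (hy i hi) (hy j hj) (hh.comp hk).continuousOn
    (hk.comp hh).continuousOn hle hge

end MonotoneDynamics

theorem slope_comp_eq_mul {𝕜 : Type*} [Field 𝕜] (f : 𝕜 → 𝕜) {g : 𝕜 → 𝕜} {s t : 𝕜}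
    (h : g s ≠ g t) : slope (f ∘ g) s t = slope f (g s) (g t) * slope g s t := by
  simp only [slope_def_field, comp_apply]
  rw [div_mul_div_cancel₀ (sub_ne_zero.2 h.symm)]

theorem slope_pos_of_strictMono {f : ℝ → ℝ} (hf : StrictMono f) {s t : ℝ} (hst : s ≠ t) :
    0 < slope f s t :=
  (hf.strictMonoOn univ).slope_pos (mem_univ s) (mem_univ t) hst

theorem slope_comp_le_exp_add_mul {f g : ℝ → ℝ} (hf : StrictMono f) (hg : StrictMono g)
    {s t u v A B : ℝ} (hst : s ≠ t) (huv : u ≠ v)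
    (hA : slope f (g s) (g t) ≤ Real.exp A * slope f (g u) (g v))
    (hB : slope g s t ≤ Real.exp B * slope g u v) :
    slope (f ∘ g) s t ≤ Real.exp (A + B) * slope (f ∘ g) u v := by
  rw [slope_comp_eq_mul f (hg.injective.ne hst), slope_comp_eq_mul f (hg.injective.ne huv),
    Real.exp_add, mul_mul_mul_comm]
  have hf_slope := slope_pos_of_strictMono hf (hg.injective.ne huv)
  exact mul_le_mul hA hB (slope_pos_of_strictMono hg hst).le (by positivity)

theorem slope_map_le_mul_slope_of_commute {e c : ℝ → ℝ} (he : StrictMono e) (hc : StrictMono c)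
    (hec : Function.Commute e c) {s t E : ℝ} (hst : s ≠ t)
    (hE : slope e (c s) (c t) ≤ E * slope e s t) :
    slope c (e s) (e t) ≤ E * slope c s t := by
  refine le_of_mul_le_mul_right ?_ (slope_pos_of_strictMono he hst)
  calc slope c (e s) (e t) * slope e s t
      = slope e (c s) (c t) * slope c s t := by
        rw [← slope_comp_eq_mul c (he.injective.ne hst), ← hec.comp_eq,
          slope_comp_eq_mul e (hc.injective.ne hst)]
    _ ≤ E * slope e s t * slope c s t := by
        gcongr
        exact (slope_pos_of_strictMono hc hst).le
    _ = E * slope c s t * slope e s t := mul_right_comm ..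

theorem exists_derivWithin_eq_slope {f : ℝ → ℝ} {I : Set ℝ} (hI : I.OrdConnected)
    (hf : DifferentiableOn ℝ f I) {s t : ℝ} (hs : s ∈ I) (ht : t ∈ I) (hst : s ≠ t) :
    ∃ ξ ∈ uIcc s t, derivWithin f I ξ = slope f s t := by
  wlog hlt : s < t generalizing s t
  · rw [uIcc_comm, slope_comm]
    exact this ht hs hst.symm (hst.symm.lt_of_le (not_lt.1 hlt))
  have hsub : Icc s t ⊆ I := hI.out hs ht
  obtain ⟨ξ, hξ, hslope⟩ := exists_deriv_eq_slope' f hlt (hf.continuousOn.mono hsub)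
    (hf.mono (Ioo_subset_Icc_self.trans hsub))
  have hnhds : I ∈ 𝓝 ξ := mem_of_superset (Icc_mem_nhds hξ.1 hξ.2) hsub
  exact ⟨ξ, uIcc_of_lt hlt ▸ Ioo_subset_Icc_self hξ, (derivWithin_of_mem_nhds hnhds).trans hslope⟩

section Perm

theorem perm_commute_iff {α : Type*} {f g : Equiv.Perm α} :
    Commute f g ↔ Function.Commute f g :=
  Equiv.ext_iff

theorem perm_apply_mem_iff {α : Type*} {f : Equiv.Perm α} {s : Set α} (hf : ∀ x ∉ s, f x = x)
    {x : α} : f x ∈ s ↔ x ∈ s := by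
  refine ⟨fun hfx ↦ ?_, fun hx ↦ ?_⟩
  · by_contra hx
    exact hx (hf x hx ▸ hfx)
  · by_contra hfx
    exact hfx ((f.injective (hf _ hfx)).symm ▸ hx)

theorem isFixedPt_inv_mul_iff {α : Type*} {f g : Equiv.Perm α} {x : α} :
    IsFixedPt ⇑(f⁻¹ * g) x ↔ g x = f x :=
  Equiv.Perm.inv_eq_iff_eq

theorem strictMono_of_strictMonoOn {α : Type*} [LinearOrder α] {f : Equiv.Perm α} {I : Set α}
    (hI : I.OrdConnected) (hf : ∀ x ∉ I, f x = x) (hmono : StrictMonoOn f I) :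
    StrictMono f := by
  intro s t hst
  by_cases hs : s ∈ I <;> by_cases ht : t ∈ I
  · exact hmono hs ht hst
  · rw [hf t ht]
    by_contra! hle
    exact ht (hI.out hs ((perm_apply_mem_iff hf).2 hs) ⟨hst.le, hle⟩)
  · rw [hf s hs]
    by_contra! hle
    exact hs (hI.out ((perm_apply_mem_iff hf).2 ht) ht ⟨hle, hst.le⟩)
  · rwa [hf s hs, hf t ht]

end Perm

/-- `V` controls the distortion of `f` on `I`: within `[a, b]`, chord slopes of `f` differ by a
factor of at most `exp (V b - V a)`. If `log f'` has bounded variation, `V` can be taken to be its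
variation function; working with chords makes the condition visibly stable under
composition and inversion. -/
def DistortionBound (f V : ℝ → ℝ) (I : Set ℝ) : Prop :=
  ∀ ⦃a b⦄, a ∈ I → b ∈ I → ∀ ⦃s t u v⦄, s ∈ Icc a b → t ∈ Icc a b → u ∈ Icc a b → v ∈ Icc a b →
    s ≠ t → u ≠ v → slope f s t ≤ Real.exp (V b - V a) * slope f u v

namespace DistortionBound

variable {f V : ℝ → ℝ} {I : Set ℝ}

theorem of_lipschitzOnWith_log_derivWithin {K : NNReal} (hI : I.OrdConnected)
    (hf : DifferentiableOn ℝ f I) (hpos : ∀ x ∈ I, 0 < derivWithin f I x)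
    (hK : LipschitzOnWith K (fun x ↦ Real.log (derivWithin f I x)) I) :
    DistortionBound f (fun x ↦ K * x) I := by
  intro a b ha hb s t u v hs ht hu hv hst huv
  have hab : Icc a b ⊆ I := hI.out ha hb
  obtain ⟨ξ, hξ, hξ_slope⟩ := exists_derivWithin_eq_slope hI hf (hab hs) (hab ht) hst
  obtain ⟨η, hη, hη_slope⟩ := exists_derivWithin_eq_slope hI hf (hab hu) (hab hv) huv
  replace hξ : ξ ∈ Icc a b := ordConnected_Icc.uIcc_subset hs ht hξ
  replace hη : η ∈ Icc a b := ordConnected_Icc.uIcc_subset hu hv hη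
  have hlog : Real.log (derivWithin f I ξ) - Real.log (derivWithin f I η) ≤ K * b - K * a :=
    calc _ ≤ dist (Real.log (derivWithin f I ξ)) (Real.log (derivWithin f I η)) := le_abs_self _
      _ ≤ K * dist ξ η := hK.dist_le_mul ξ (hab hξ) η (hab hη)
      _ ≤ K * (b - a) := by gcongr; exact Real.dist_le_of_mem_Icc hξ hη
      _ = K * b - K * a := mul_sub ..
  rw [← hξ_slope, ← hη_slope, ← Real.exp_log (hpos ξ (hab hξ)),
    ← Real.exp_log (hpos η (hab hη)), ← Real.exp_add, Real.exp_le_exp]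
  linarith

theorem monotoneOn (hV : DistortionBound f V I) (hf : StrictMonoOn f I) : MonotoneOn V I := by
  intro a ha b hb hab
  obtain rfl | hlt := hab.eq_or_lt
  · rfl
  have hle := hV ha hb (left_mem_Icc.2 hab) (right_mem_Icc.2 hab) (left_mem_Icc.2 hab)
    (right_mem_Icc.2 hab) hlt.ne hlt.ne
  simpa using (le_mul_iff_one_le_left (hf.slope_pos ha hb hlt.ne)).1 hle

theorem one_le_exp_mul_slope_of_isFixedPt (hV : DistortionBound f V I) {a p y : ℝ} (ha : a ∈ I)
    (hy : y ∈ I) (hfa : IsFixedPt f a) (hfp : IsFixedPt f p) (hap : a < p) (hpy : p < y) :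
    1 ≤ Real.exp (V y - V a) * slope f p y := by
  have hay : a ≤ y := (hap.trans hpy).le
  have hslope : slope f a p = 1 := by
    rw [slope_def_field, hfa.eq, hfp.eq, div_self (sub_ne_zero.2 hap.ne')]
  exact hslope.symm.trans_le <| hV ha hy (left_mem_Icc.2 hay) ⟨hap.le, hpy.le⟩ ⟨hap.le, hpy.le⟩
    (right_mem_Icc.2 hay) hap.ne hpy.ne

theorem comp {g W : ℝ → ℝ} (hV : DistortionBound f V I) (hW : DistortionBound g W I)
    (hf : StrictMono f) (hg : StrictMono g) (hgI : MapsTo g I I) :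
    DistortionBound (f ∘ g) (fun x ↦ V (g x) + W x) I := by
  intro a b ha hb s t u v hs ht hu hv hst huv
  have hgIcc := hg.monotone.mapsTo_Icc (a := a) (b := b)
  rw [add_sub_add_comm]
  exact slope_comp_le_exp_add_mul hf hg hst huv
    (hV (hgI ha) (hgI hb) (hgIcc hs) (hgIcc ht) (hgIcc hu) (hgIcc hv)
      (hg.injective.ne hst) (hg.injective.ne huv))
    (hW ha hb hs ht hu hv hst huv)

theorem of_rightInverse {e : ℝ → ℝ} (hV : DistortionBound f V I) (hf : StrictMono f)
    (he : StrictMono e) (hfe : RightInverse e f) (heI : MapsTo e I I) :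
    DistortionBound e (V ∘ e) I := by
  intro a b ha hb s t u v hs ht hu hv hst huv
  have heIcc := he.monotone.mapsTo_Icc (a := a) (b := b)
  have slope_eq : ∀ x y, slope e x y = (slope f (e x) (e y))⁻¹ := fun x y ↦ by
    rw [slope_def_field, slope_def_field, hfe, hfe, inv_div]
  have hle := hV (heI ha) (heI hb) (heIcc hu) (heIcc hv) (heIcc hs) (heIcc ht)
    (he.injective.ne huv) (he.injective.ne hst)
  rw [slope_eq, slope_eq, ← div_eq_mul_inv,
    inv_le_iff_one_le_mul₀ (slope_pos_of_strictMono hf (he.injective.ne hst)), div_mul_eq_mul_div,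
    one_le_div₀ (slope_pos_of_strictMono hf (he.injective.ne huv))]
  exact hle

theorem slope_iterate_le (hV : DistortionBound f V I) (hf : StrictMono f) {a p y : ℝ}
    (hI : Icc a y ⊆ I) (ha : IsFixedPt f a) (hap : a < p) (hfy : f y ≤ p) (hpy : p < y)
    {s t u v : ℝ} (hs : s ∈ Icc p y) (ht : t ∈ Icc p y) (hu : u ∈ Icc p y) (hv : v ∈ Icc p y)
    (hst : s ≠ t) (huv : u ≠ v) (n : ℕ) :
    slope f^[n] s t ≤ Real.exp (V y - V (f^[n] y)) * slope f^[n] u v := by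
  induction n with
  | zero => simp [slope_def_field, sub_ne_zero.2 hst.symm, sub_ne_zero.2 huv.symm]
  | succ n ih =>
    have hn : StrictMono f^[n] := hf.iterate n
    have hyI : ∀ i, f^[i] y ∈ I := fun i ↦ hI <| Ioc_subset_Icc_self <|
      iterate_mem_Ioc hf ha (hap.trans hpy) (hfy.trans hpy.le) i
    have hpI : f^[n] p ∈ I := hI <| Icc_subset_Icc_right hpy.le <| Ioc_subset_Icc_self <|
      iterate_mem_Ioc hf ha hap ((hf hpy).le.trans hfy) n
    have hIcc := hn.monotone.mapsTo_Icc (a := p) (b := y)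
    have hdisjoint : V (f^[n + 1] y) ≤ V (f^[n] p) :=
      hV.monotoneOn (hf.strictMonoOn I) (hyI (n + 1)) hpI (hn.monotone hfy)
    have hslope := slope_pos_of_strictMono (hf.iterate (n + 1)) huv
    calc slope f^[n + 1] s t
        ≤ Real.exp (V (f^[n] y) - V (f^[n] p) + (V y - V (f^[n] y))) * slope f^[n + 1] u v := by
          rw [iterate_succ']
          exact slope_comp_le_exp_add_mul hf hn hst huv
            (hV hpI (hyI n) (hIcc hs) (hIcc ht) (hIcc hu) (hIcc hv)
              (hn.injective.ne hst) (hn.injective.ne huv)) ih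
      _ ≤ Real.exp (V y - V (f^[n + 1] y)) * slope f^[n + 1] u v := by
          gcongr
          linarith

end DistortionBound

/-- The permutation `f` of `ℝ` is an increasing homeomorphism supported on `I` with continuously
controlled distortion there. On a compact interval this amounts to being a `C¹` diffeomorphism
such that `log f'` has bounded variation, the regularity under which Kopell's lemma holds. -/
structure IsBoundedDistortion (I : Set ℝ) (f : Equiv.Perm ℝ) : Prop where
  strictMono : StrictMono f
  eq_of_notMem : ∀ x ∉ I, f x = x
  exists_distortionBound : ∃ V, ContinuousOn V I ∧ DistortionBound f V I

namespace IsBoundedDistortion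

variable {I : Set ℝ} {f g c h k : Equiv.Perm ℝ}

theorem continuous (hf : IsBoundedDistortion I f) : Continuous f :=
  hf.strictMono.monotone.continuous_of_surjective f.surjective

theorem apply_mem_iff (hf : IsBoundedDistortion I f) {x : ℝ} : f x ∈ I ↔ x ∈ I :=
  perm_apply_mem_iff hf.eq_of_notMem

theorem mapsTo (hf : IsBoundedDistortion I f) : MapsTo f I I := fun _ ↦ hf.apply_mem_iff.2

theorem one : IsBoundedDistortion I 1 where
  strictMono := strictMono_id
  eq_of_notMem _ _ := rfl
  exists_distortionBound := by
    refine ⟨fun _ ↦ 0, continuousOn_const, fun a b _ _ s t u v _ _ _ _ hst huv ↦ ?_⟩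
    simp [slope_def_field, sub_ne_zero.2 hst.symm, sub_ne_zero.2 huv.symm]

theorem mul (hf : IsBoundedDistortion I f) (hg : IsBoundedDistortion I g) :
    IsBoundedDistortion I (f * g) where
  strictMono := hf.strictMono.comp hg.strictMono
  eq_of_notMem x hx := by
    rw [Equiv.Perm.mul_apply, hg.eq_of_notMem x hx, hf.eq_of_notMem x hx]
  exists_distortionBound := by
    obtain ⟨V, hVc, hV⟩ := hf.exists_distortionBound
    obtain ⟨W, hWc, hW⟩ := hg.exists_distortionBound
    exact ⟨_, (hVc.comp hg.continuous.continuousOn hg.mapsTo).add hWc,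
      hV.comp hW hf.strictMono hg.strictMono hg.mapsTo⟩

theorem pow (hf : IsBoundedDistortion I f) (n : ℕ) : IsBoundedDistortion I (f ^ n) := by
  induction n with
  | zero => exact one
  | succ n ih => exact pow_succ f n ▸ ih.mul hf

theorem inv (hf : IsBoundedDistortion I f) : IsBoundedDistortion I f⁻¹ := by
  have hright : RightInverse (f⁻¹ : Equiv.Perm ℝ) f := f.apply_symm_apply
  have hmono : StrictMono (f⁻¹ : Equiv.Perm ℝ) := fun s t hst ↦
    hf.strictMono.lt_iff_lt.1 (by rwa [hright, hright])
  have hcont : Continuous (f⁻¹ : Equiv.Perm ℝ) :=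
    hmono.monotone.continuous_of_surjective (f⁻¹ : Equiv.Perm ℝ).surjective
  have hmaps : MapsTo (f⁻¹ : Equiv.Perm ℝ) I I := fun x hx ↦
    hf.apply_mem_iff.1 ((hright x).symm ▸ hx)
  obtain ⟨V, hVc, hV⟩ := hf.exists_distortionBound
  exact {
    strictMono := hmono
    eq_of_notMem := fun x hx ↦ Equiv.Perm.inv_eq_iff_eq.2 (hf.eq_of_notMem x hx).symm
    exists_distortionBound := ⟨_, hVc.comp hcont.continuousOn hmaps,
      hV.of_rightInverse hf.strictMono hmono hright hmaps⟩ }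

theorem one_le_exp_mul_slope_of_commute (hc : IsBoundedDistortion I c) {f V : ℝ → ℝ}
    (hf : StrictMono f) (hV : DistortionBound f V I) (hfc : Function.Commute f c) {a p y : ℝ}
    (hI : Icc a y ⊆ I) (ha : IsFixedPt f a) (ht : Tendsto (fun n ↦ f^[n] y) atTop (𝓝 a))
    (hap : a < p) (hfy : f y ≤ p) (hpy : p < y) (hcp : IsFixedPt c p) (hcy : c y ≤ y) :
    1 ≤ Real.exp (V y - V a) * slope c p y := by
  obtain ⟨W, hWc, hW⟩ := hc.exists_distortionBound
  have haI : a ∈ I := hI (left_mem_Icc.2 (hap.trans hpy).le)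
  have hyI : ∀ j, f^[j] y ∈ I := fun j ↦ hI <| Ioc_subset_Icc_self <|
    iterate_mem_Ioc hf ha (hap.trans hpy) (hfy.trans hpy.le) j
  have hca : IsFixedPt c a := isFixedPt_of_tendsto_iterate_of_commute hc.continuous hfc hcp
    (tendsto_iterate_of_mem_Icc hf.monotone ha ⟨hap.le, hpy.le⟩ ht)
  have hnear : ∀ j, 1 ≤ Real.exp (W (f^[j] y) - W a) * slope c (f^[j] p) (f^[j] y) := fun j ↦
    hW.one_le_exp_mul_slope_of_isFixedPt haI (hyI j) hca (hcp.map (hfc.iterate_left j))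
      (by simpa only [(ha.iterate j).eq] using hf.iterate j hap) (hf.iterate j hpy)
  have hconj : ∀ j, slope c (f^[j] p) (f^[j] y) ≤ Real.exp (V y - V a) * slope c p y := fun j ↦ by
    have hcy' : p ≤ c y := by simpa only [hcp.eq] using hc.strictMono.monotone hpy.le
    have hVa : V a ≤ V (f^[j] y) := hV.monotoneOn (hf.strictMonoOn I) haI (hyI j) <|
      (iterate_mem_Ioc hf ha (hap.trans hpy) (hfy.trans hpy.le) j).1.le
    have hslope := slope_pos_of_strictMono (hf.iterate j) hpy.ne
    refine slope_map_le_mul_slope_of_commute (hf.iterate j) hc.strictMono (hfc.iterate_left j)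
      hpy.ne ((hV.slope_iterate_le hf hI ha hap hfy hpy (hcp.eq.symm ▸ left_mem_Icc.2 hpy.le)
        ⟨hcy', hcy⟩ (left_mem_Icc.2 hpy.le) (right_mem_Icc.2 hpy.le)
        (hc.strictMono.injective.ne hpy.ne) hpy.ne j).trans ?_)
    gcongr
  have hW_lim : Tendsto (fun j ↦ Real.exp (W (f^[j] y) - W a)) atTop (𝓝 1) := by
    have hlim := (hWc a haI).tendsto.comp
      (tendsto_nhdsWithin_iff.2 ⟨ht, Eventually.of_forall hyI⟩)
    simpa using (hlim.sub_const (W a)).rexp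
  refine ge_of_tendsto' (one_mul (Real.exp (V y - V a) * slope c p y) ▸ hW_lim.mul_const _)
    fun j ↦ (hnear j).trans ?_
  gcongr
  exact hconj j

theorem not_map_lt_of_commute (hf : IsBoundedDistortion I f) (hc : IsBoundedDistortion I c)
    (hfc : Commute f c) {a x y : ℝ} (hI : Icc a y ⊆ I) (ha : IsFixedPt f a)
    (ht : Tendsto (fun n ↦ f^[n] y) atTop (𝓝 a)) (hx : x ∈ Ioc a y) (hcx : IsFixedPt c x) :
    ¬ c y < y := by
  intro hcy
  have hxl : ∀ l, x ≤ c^[l] y := fun l ↦ by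
    simpa only [(hcx.iterate l).eq] using hc.strictMono.monotone.iterate l hx.2
  obtain ⟨p, hcp, hpy, hlim⟩ := exists_isFixedPt_tendsto_iterate hc.strictMono.monotone
    hc.continuous hcy ⟨x, forall_mem_range.2 hxl⟩
  have hap : a < p := hx.1.trans_le (ge_of_tendsto' hlim hxl)
  obtain ⟨N, hfN, hN⟩ := ((ht.eventually_lt_const hap).and (eventually_gt_atTop 0)).exists
  obtain ⟨V, -, hV⟩ := (hf.pow N).exists_distortionBound
  have htN : Tendsto (fun j ↦ (⇑(f ^ N))^[j] y) atTop (𝓝 a) := by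
    simpa only [Equiv.Perm.coe_pow, ← iterate_mul, comp_def, id_eq] using
      ht.comp (tendsto_id.const_mul_atTop' hN)
  have hlower : ∀ l, 1 ≤ Real.exp (V y - V a) * slope c^[l] p y := fun l ↦ by
    rw [← Equiv.Perm.coe_pow]
    refine (hc.pow l).one_le_exp_mul_slope_of_commute (hf.pow N).strictMono hV
      (perm_commute_iff.1 (hfc.pow_pow N l)) hI ?_ htN hap ?_ hpy ?_ ?_
    · simpa only [Equiv.Perm.coe_pow] using ha.iterate N
    · simpa only [Equiv.Perm.coe_pow] using hfN.le
    · simpa only [Equiv.Perm.coe_pow] using hcp.iterate l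
    · exact Equiv.Perm.coe_pow c l ▸
        hc.strictMono.monotone.antitone_iterate_of_map_le hcy.le l.zero_le
  have hslope_lim : Tendsto (fun l ↦ slope c^[l] p y) atTop (𝓝 0) := by
    simpa [slope_def_field, (hcp.iterate _).eq] using
      (hlim.sub_const p).div_const (y - p)
  have := ge_of_tendsto' (hslope_lim.const_mul (Real.exp (V y - V a))) hlower
  norm_num at this

theorem isFixedPt_of_commute (hf : IsBoundedDistortion I f) (hc : IsBoundedDistortion I c)
    (hfc : Commute f c) {a x y : ℝ} (hI : Icc a y ⊆ I) (ha : IsFixedPt f a)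
    (ht : Tendsto (fun n ↦ f^[n] y) atTop (𝓝 a)) (hx : x ∈ Ioc a y) (hcx : IsFixedPt c x) :
    IsFixedPt c y := by
  refine (not_lt.1 fun hlt ↦ ?_).antisymm
    (not_lt.1 (not_map_lt_of_commute hf hc hfc hI ha ht hx hcx))
  refine not_map_lt_of_commute hf hc.inv hfc.inv_right hI ha ht hx
    (Equiv.Perm.inv_eq_iff_eq.2 hcx.eq.symm) (hc.strictMono.lt_iff_lt.1 ?_)
  exact (c.apply_symm_apply y).trans_lt hlt

theorem map_map_eq_of_pow_map_lt (hh : IsBoundedDistortion I h) (hk : IsBoundedDistortion I k)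
    (hI : I.OrdConnected) (hIc : IsClosed I) (hIb : BddBelow I) {m n : ℕ} (hm : 0 < m)
    (hrel : k ^ m = h ^ n) {y : ℝ} (hy : (k ^ m) y < y) : h (k y) = k (h y) := by
  have hf : IsBoundedDistortion I (k ^ m) := hk.pow m
  have hfh : Commute (k ^ m) h := hrel ▸ Commute.pow_self h n
  have hfk : Commute (k ^ m) k := Commute.pow_self k m
  have hyI : y ∈ I := by
    by_contra hy'
    exact hy.ne (hf.eq_of_notMem y hy')
  have horbit : ∀ j, (⇑(k ^ m))^[j] y ∈ I := fun j ↦ hf.mapsTo.iterate j hyI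
  obtain ⟨a, ha, hay, ht⟩ := exists_isFixedPt_tendsto_iterate hf.strictMono.monotone
    hf.continuous hy (hIb.mono (range_subset_iff.2 horbit))
  have hIcc : Icc a y ⊆ I := hI.out (hIc.mem_of_tendsto ht (.of_forall horbit)) hyI
  rw [Equiv.Perm.coe_pow] at ha hy
  have hka : IsFixedPt k a := (isFixedPt_iterate_iff hk.strictMono.monotone hm).1 ha
  have hky : k y < y := (Function.Commute.id_right.iterate_pos_lt_iff_map_lt
    hk.strictMono.monotone strictMono_id hm).1 (by simpa using hy)
  obtain ⟨x, hx, hxcomm⟩ := exists_map_map_eq_of_commute_iterate hh.continuous hk.continuous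
    hk.strictMono.monotone hm (Equiv.Perm.coe_pow k m ▸ perm_commute_iff.1 hfh.symm)
    isPreconnected_Ioc fun i _ ↦ iterate_mem_Ioc hk.strictMono hka hay hky.le i
  have hcomm : Commute (k ^ m) ((k * h)⁻¹ * (h * k)) :=
    (hfk.mul_right hfh).inv_right.mul_right (hfh.mul_right hfk)
  exact isFixedPt_inv_mul_iff.1 <| hf.isFixedPt_of_commute ((hk.mul hh).inv.mul (hh.mul hk)) hcomm
    hIcc (by rwa [Equiv.Perm.coe_pow]) ht hx (isFixedPt_inv_mul_iff.2 hxcomm)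

end IsBoundedDistortion

theorem IsDiffI.isBoundedDistortion {f : Equiv.Perm ℝ} (hf : IsDiffI f) :
    IsBoundedDistortion (Icc 0 1) f := by
  obtain ⟨hoff, hsmooth, hpos⟩ := hf
  have hd : DifferentiableOn ℝ f (Icc 0 1) := hsmooth.differentiableOn two_ne_zero
  have hlog : ContDiffOn ℝ 1 (fun x ↦ Real.log (derivWithin f (Icc 0 1) x)) (Icc 0 1) :=
    (hsmooth.derivWithin (uniqueDiffOn_Icc zero_lt_one) one_add_one_eq_two.le).log
      fun x hx ↦ (hpos x hx).ne'
  have hmono : StrictMonoOn f (Icc 0 1) :=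
    strictMonoOn_of_deriv_pos (convex_Icc 0 1) hd.continuousOn fun x hx ↦
      (hpos x (interior_subset hx)).trans_eq <|
        derivWithin_of_mem_nhds (mem_interior_iff_mem_nhds.1 hx)
  obtain ⟨K, hK⟩ := hlog.exists_lipschitzOnWith one_ne_zero (convex_Icc 0 1) isCompact_Icc
  exact ⟨strictMono_of_strictMonoOn ordConnected_Icc hoff hmono, hoff,
    _, (continuous_const_mul _).continuousOn,
    .of_lipschitzOnWith_log_derivWithin ordConnected_Icc hd hpos hK⟩

theorem bs_relation_commute_on_interval_general {I : Set ℝ} (hI : I.OrdConnected)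
    (hIc : IsClosed I) (hIb : BddBelow I) {h k : Equiv.Perm ℝ} (hh : IsBoundedDistortion I h)
    (hk : IsBoundedDistortion I k) {m n : ℕ} (hm : 0 < m) (hrel : k ^ m = h ^ n) :
    Commute h k := by
  have hfh : Commute (k ^ m) h := hrel ▸ Commute.pow_self h n
  have hfk : Commute (k ^ m) k := Commute.pow_self k m
  refine perm_commute_iff.2 fun y ↦ ?_
  rcases lt_trichotomy ((k ^ m) y) y with hlt | heq | hgt
  · exact hh.map_map_eq_of_pow_map_lt hk hI hIc hIb hm hrel hlt
  · have hfix : ∀ {z}, IsFixedPt (k ^ m) z → IsFixedPt k z :=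
      (isFixedPt_iterate_iff hk.strictMono.monotone hm).1
    have hky : IsFixedPt k y := hfix heq
    have hkhy : IsFixedPt k (h y) := hfix (IsFixedPt.map heq (perm_commute_iff.1 hfh.symm))
    rw [hky.eq, hkhy.eq]
  · have hlt : (k⁻¹ ^ m) (h (k y)) < h (k y) := by
      rw [← (hk.pow m).strictMono.lt_iff_lt, inv_pow, ← Equiv.Perm.mul_apply, mul_inv_cancel,
        Equiv.Perm.one_apply, ← Equiv.Perm.mul_apply h k, ← Equiv.Perm.mul_apply,
        (hfh.mul_right hfk).eq]
      exact (hh.mul hk).strictMono hgt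
    have hinv := hh.inv.map_map_eq_of_pow_map_lt hk.inv hI hIc hIb hm
      (by rw [inv_pow, inv_pow, hrel]) hlt
    refine Equiv.Perm.inv_eq_iff_eq.1 (h.symm.injective (hinv.trans ?_))
    simp

/-- **Baumslag–Solitar relation forces commutation on the interval.** If `g` and `h`
are orientation-preserving C² diffeomorphisms of `I = [0,1]` satisfying
`g ∘ hᵐ ∘ g⁻¹ = hⁿ` for some positive integers `m` and `n`, then `h` and
`g ∘ h ∘ g⁻¹` commute. -/
theorem bs_relation_commute_on_interval (g h : Equiv.Perm ℝ)
    (hg : IsDiffI g) (hh : IsDiffI h)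
    (m n : ℕ) (hm : 0 < m) (hn : 0 < n)
    (hrel : g * h ^ m * g⁻¹ = h ^ n) :
    Commute h (g * h * g⁻¹) := by
  have hk := (hg.isBoundedDistortion.mul hh.isBoundedDistortion).mul hg.isBoundedDistortion.inv
  exact bs_relation_commute_on_interval_general ordConnected_Icc isClosed_Icc bddBelow_Icc
    hh.isBoundedDistortion hk hm (by rw [conj_pow, hrel])
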